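/- Let ρ > 0, σ > 0, h(ξ) = ∫_ξ^∞ erfc(η) dη, and define φ_a(ξ) = (ρσ/2)·(√h(ξ/σ) − √h(−ξ/σ))². Then lim_{ξ→0} φ_a(ξ)/ξ² = ρ√π/(2σ). Equivalently, the annealed variance of the rescaled tracer position is σ/(ρ√π). -/

import Mathlib

open MeasureTheory Real Filter Topology

/-- The complementary error function `erfc(x) = (2/√π) ∫_x^∞ e^{−u²} du`. -/
noncomputable def erfc (x : ℝ) : ℝ := (2 / Real.sqrt π) * ∫ u in Set.Ioi x, Real.exp (-u ^ 2)

/-- `h(ξ) = ∫_ξ^∞ erfc(η) dη`. -/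
noncomputable def hfun (ξ : ℝ) : ℝ := ∫ η in Set.Ioi ξ, erfc η

/-- The annealed large deviation function
`φ_a(ξ) = (ρσ/2)(√h(ξ/σ) − √h(−ξ/σ))²`. -/
noncomputable def φa (ρ σ ξ : ℝ) : ℝ :=
  (ρ * σ / 2) * (Real.sqrt (hfun (ξ / σ)) - Real.sqrt (hfun (-ξ / σ))) ^ 2


lemma aux_int : Integrable (fun u : ℝ => Real.exp (-u ^ 2)) := by
  simpa using integrable_exp_neg_mul_sq (b := 1) one_pos

lemma aux_G_deriv (x : ℝ) :
    HasDerivAt (fun x : ℝ => ∫ u in Set.Ioi x, Real.exp (-u ^ 2)) (-Real.exp (-x ^ 2)) x := by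
  have h1 : (fun x : ℝ => ∫ u in Set.Ioi x, Real.exp (-u ^ 2)) =
      fun x : ℝ => (∫ u in Set.Ioi (0:ℝ), Real.exp (-u ^ 2))
        - ∫ u in (0:ℝ)..x, Real.exp (-u ^ 2) := by
    funext y
    rw [← intervalIntegral.integral_interval_add_Ioi (a := 0) (b := y)
      aux_int.integrableOn aux_int.integrableOn]
    ring
  rw [h1]
  have hc : Continuous (fun u : ℝ => Real.exp (-u ^ 2)) := by fun_prop
  exact (hc.integral_hasStrictDerivAt 0 x).hasDerivAt.const_sub _

lemma aux_erfc_deriv (x : ℝ) :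
    HasDerivAt erfc (2 / Real.sqrt π * (-Real.exp (-x ^ 2))) x :=
  (aux_G_deriv x).const_mul _

lemma aux_erfc_nonneg (x : ℝ) : 0 ≤ erfc x := by
  unfold erfc
  refine mul_nonneg (by positivity) (integral_nonneg fun u => (Real.exp_pos _).le)

lemma aux_exp_tendsto : Tendsto (fun x : ℝ => Real.exp (-x ^ 2)) atTop (𝓝 0) :=
  Real.tendsto_exp_neg_atTop_nhds_zero.comp (tendsto_pow_atTop two_ne_zero)

lemma aux_exp_deriv (x : ℝ) :
    HasDerivAt (fun x : ℝ => Real.exp (-x ^ 2)) (-(2 * x) * Real.exp (-x ^ 2)) x := by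
  have := ((hasDerivAt_pow 2 x).neg).exp
  convert! this using 1
  simp
  ring

lemma aux_bound (x : ℝ) (hx : 0 < x) :
    x * ∫ u in Set.Ioi x, Real.exp (-u ^ 2) ≤ Real.exp (-x ^ 2) / 2 := by
  have hi : Integrable (fun u : ℝ => u * Real.exp (-u ^ 2)) := by
    simpa using integrable_mul_exp_neg_mul_sq (b := 1) one_pos
  have h2 : ∫ u in Set.Ioi x, u * Real.exp (-u ^ 2) = 0 - (-Real.exp (-x ^ 2) / 2) := by
    refine integral_Ioi_of_hasDerivAt_of_tendsto' (f := fun u => -Real.exp (-u ^ 2) / 2)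
      (fun y _ => ?_) hi.integrableOn ?_
    · convert! ((aux_exp_deriv y).neg.div_const 2) using 1
      ring
    · simpa using aux_exp_tendsto.neg.div_const 2
  have h3 : x * ∫ u in Set.Ioi x, Real.exp (-u ^ 2) ≤
      ∫ u in Set.Ioi x, u * Real.exp (-u ^ 2) := by
    rw [← integral_const_mul]
    refine setIntegral_mono_on (aux_int.const_mul x).integrableOn hi.integrableOn
      measurableSet_Ioi fun u hu => ?_
    exact mul_le_mul_of_nonneg_right (le_of_lt hu) (Real.exp_pos _).le
  linarith

lemma aux_tendsto : Tendsto (fun x : ℝ => x * erfc x) atTop (𝓝 0) := by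
  have h := aux_exp_tendsto.const_mul (1 / Real.sqrt π)
  rw [mul_zero] at h
  refine squeeze_zero' ?_ ?_ h
  · filter_upwards [eventually_gt_atTop 0] with x hx
    exact mul_nonneg hx.le (aux_erfc_nonneg x)
  · filter_upwards [eventually_gt_atTop 0] with x hx
    have := mul_le_mul_of_nonneg_left (aux_bound x hx)
      (show 0 ≤ 2 / Real.sqrt π by positivity)
    unfold erfc
    calc _ = 2 / Real.sqrt π * (x * ∫ u in Set.Ioi x, Real.exp (-u ^ 2)) := by ring
      _ ≤ _ := this
      _ = _ := by ring

lemma aux_F_deriv (x : ℝ) :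
    HasDerivAt (fun x => x * erfc x - 1 / Real.sqrt π * Real.exp (-x ^ 2)) (erfc x) x := by
  convert! ((hasDerivAt_id x).mul (aux_erfc_deriv x)).sub
    ((aux_exp_deriv x).const_mul (1 / Real.sqrt π)) using 1
  simp
  ring

lemma aux_h (x : ℝ) : hfun x = -(x * erfc x - 1 / Real.sqrt π * Real.exp (-x ^ 2)) := by
  unfold hfun
  rw [integral_Ioi_of_hasDerivAt_of_nonneg' (l := 0) (fun y _ => aux_F_deriv y)
    (fun y _ => aux_erfc_nonneg y)]
  · ring
  · simpa using aux_tendsto.sub (aux_exp_tendsto.const_mul (1 / Real.sqrt π))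

lemma aux_erfc_zero : erfc 0 = 1 := by
  have h := integral_gaussian_Ioi 1
  simp only [neg_mul, one_mul, div_one] at h
  unfold erfc
  rw [h]
  have : Real.sqrt π ≠ 0 := by positivity
  field_simp

theorem annealed_ldf_quadratic (ρ σ : ℝ) (hρ : 0 < ρ) (hσ : 0 < σ) :
    Tendsto (fun ξ : ℝ => φa ρ σ ξ / ξ ^ 2) (𝓝[≠] 0)
      (nhds (ρ * Real.sqrt π / (2 * σ))) := by
  have hp : 0 < Real.sqrt π := by positivity
  have h0 : hfun 0 = 1 / Real.sqrt π := by simp [aux_h]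
  have hd : HasDerivAt hfun (-1) 0 := by
    have h1 : hfun = fun x => -(x * erfc x - 1 / Real.sqrt π * Real.exp (-x ^ 2)) :=
      funext aux_h
    have h2 := (aux_F_deriv 0).neg
    rw [aux_erfc_zero] at h2
    rw [h1]
    exact h2
  have hs : HasDerivAt (fun x => Real.sqrt (hfun x)) (-1 / (2 * Real.sqrt (hfun 0))) 0 :=
    hd.sqrt (by rw [h0]; positivity)
  set c := -1 / (2 * Real.sqrt (hfun 0)) with hc
  have hc2 : c ^ 2 = Real.sqrt π / 4 := by
    rw [hc, div_pow, mul_pow, Real.sq_sqrt (by rw [h0]; positivity), h0]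
    field_simp
    norm_num
  have e1 : HasDerivAt (fun ξ : ℝ => ξ / σ) (1 / σ) 0 := (hasDerivAt_id (0:ℝ)).div_const σ
  have e2 : HasDerivAt (fun ξ : ℝ => -ξ / σ) (-1 / σ) 0 := (hasDerivAt_id (0:ℝ)).neg.div_const σ
  have d1 : HasDerivAt (fun ξ : ℝ => Real.sqrt (hfun (ξ / σ))) (c * (1 / σ)) 0 :=
    HasDerivAt.comp (h₂ := fun x => Real.sqrt (hfun x)) 0 (by simpa using hs) e1
  have d2 : HasDerivAt (fun ξ : ℝ => Real.sqrt (hfun (-ξ / σ))) (c * (-1 / σ)) 0 :=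
    HasDerivAt.comp (h₂ := fun x => Real.sqrt (hfun x)) 0 (by simpa using hs) e2
  have d := (hasDerivAt_iff_tendsto_slope.1 (d1.sub d2))
  have t := (d.pow 2).const_mul (ρ * σ / 2)
  have hl : ρ * σ / 2 * (c * (1 / σ) - c * (-1 / σ)) ^ 2 = ρ * Real.sqrt π / (2 * σ) := by
    have : (c * (1 / σ) - c * (-1 / σ)) ^ 2 = c ^ 2 * 4 / σ ^ 2 := by
      field_simp
      ring
    rw [this, hc2]
    field_simp
  rw [hl] at t
  refine t.congr fun ξ => ?_
  simp only [slope_def_field, φa, Pi.sub_apply, neg_zero, zero_div, sub_self, sub_zero, div_pow]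
  ring
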